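/- arXiv:1304.5001 — 2 statements merged into one kernel-verified Lean document; each statement's English description precedes it below -/
import Mathlib

section
/- Let n ≥ 3, let A = (a_{ij})_{1≤i,j≤n} be an n × n real array with σ_A² > 0 and ‖a‖ > 0, let π be a permutation of {1,…,n} chosen uniformly at random, and let Y = Σ_{i=1}^n a_{iπ(i)}. Then for all t > e, with c = 8‖a‖, both P(Y − μ_A ≥ t) and P(Y − μ_A ≤ −t) are at most exp(−(t/c)(log t − log log t − σ_A²/c)). -/
open MeasureTheory ProbabilityTheory Real

noncomputable instance (n : ℕ) : MeasurableSpace (Equiv.Perm (Fin n)) := ⊤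

/-- The uniform distribution on the permutations of `{1, …, n}`. -/
noncomputable def uniformPerm (n : ℕ) : Measure (Equiv.Perm (Fin n)) :=
  (PMF.uniformOfFintype (Equiv.Perm (Fin n))).toMeasure

/-- Row mean `a_{i·}`. -/
noncomputable def rowMean (n : ℕ) (a : Fin n → Fin n → ℝ) (i : Fin n) : ℝ :=
  (1 / (n : ℝ)) * ∑ j, a i j

/-- Column mean `a_{·j}`. -/
noncomputable def colMean (n : ℕ) (a : Fin n → Fin n → ℝ) (j : Fin n) : ℝ :=
  (1 / (n : ℝ)) * ∑ i, a i j

/-- Grand mean `a_{··}`. -/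
noncomputable def grandMean (n : ℕ) (a : Fin n → Fin n → ℝ) : ℝ :=
  (1 / (n : ℝ) ^ 2) * ∑ i, ∑ j, a i j

/-- The mean `μ_A = n a_{··}` of the Hoeffding statistic. -/
noncomputable def muA (n : ℕ) (a : Fin n → Fin n → ℝ) : ℝ :=
  n * grandMean n a

/-- The variance `σ_A²` of the Hoeffding statistic. -/
noncomputable def sigmaA2 (n : ℕ) (a : Fin n → Fin n → ℝ) : ℝ :=
  (1 / ((n : ℝ) - 1)) * ∑ i, ∑ j,
    (a i j - rowMean n a i - colMean n a j + grandMean n a) ^ 2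

/-!
The exchangeable pair `(π, π ∘ (i j))` with uniform `(i, j)` gives the Stein identity
`2 n Y = ∑ i j, (Y(π) - Y(π ∘ (i j)))` for a doubly centered array. Symmetrizing over the pair and
using `|e ^ x - e ^ y| ≤ |x - y| (e ^ x + e ^ y) / 2` bounds `E[Y e ^ (s Y)]` by averages of
`E[(Y(π) - Y(π ∘ (i j)))² e ^ (s Y)]`. The squared difference depends only on `(π i, π j)`.
Prescribing these two values instead of two others costs two transpositions, hence a factor at most
`e ^ (2 s D)` if a transposition moves `Y` by at most `D`. So the square decouples from the
exponential weight, and with `m` the moment generating function of `Y`,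
`m' s ≤ σ² s e ^ (2 D s) m s`. Integrating this and applying the Chernoff bound at
`s = (log t - log log t) / (2 D)` yields the tail; `D = 4 ‖a‖` is admissible.
-/

open Finset Equiv

section RealInequalities

lemma abs_sinh_le_mul_cosh (u : ℝ) : |sinh u| ≤ |u| * cosh u := by
  have bound : ∀ x ∈ Set.Icc (-|u|) |u|, ‖deriv sinh x‖ ≤ cosh u := fun x hx => by
    rw [Real.deriv_sinh, norm_of_nonneg (cosh_pos x).le, cosh_le_cosh]
    exact abs_le.mpr hx
  have h := (convex_Icc (-|u|) |u|).norm_image_sub_le_of_norm_deriv_le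
    (fun x _ => differentiable_sinh x) bound
    (abs_le.mp (by simp : |(0 : ℝ)| ≤ |u|)) (abs_le.mp le_rfl)
  simpa [mul_comm] using h

lemma abs_exp_sub_exp_le (x y : ℝ) :
    |exp x - exp y| ≤ |x - y| * ((exp x + exp y) / 2) := by
  have hx : exp x = exp ((x + y) / 2) * exp ((x - y) / 2) := by rw [← exp_add]; ring_nf
  have hy : exp y = exp ((x + y) / 2) * exp (-((x - y) / 2)) := by rw [← exp_add]; ring_nf
  have hsub : exp x - exp y = 2 * exp ((x + y) / 2) * sinh ((x - y) / 2) := by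
    rw [hx, hy, sinh_eq]; ring
  have hadd : (exp x + exp y) / 2 = exp ((x + y) / 2) * cosh ((x - y) / 2) := by
    rw [hx, hy, cosh_eq]; ring
  calc |exp x - exp y| = 2 * exp ((x + y) / 2) * |sinh ((x - y) / 2)| := by
        rw [hsub, abs_mul, abs_of_pos (by positivity)]
    _ ≤ 2 * exp ((x + y) / 2) * (|(x - y) / 2| * cosh ((x - y) / 2)) := by
        gcongr; exact abs_sinh_le_mul_cosh _
    _ = |x - y| * ((exp x + exp y) / 2) := by
        rw [hadd, abs_div, abs_two]; ring

lemma sub_mul_exp_sub_exp_le {s : ℝ} (hs : 0 ≤ s) (x y : ℝ) :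
    (x - y) * (exp (s * x) - exp (s * y)) ≤
      s / 2 * ((x - y) ^ 2 * exp (s * x) + (x - y) ^ 2 * exp (s * y)) := by
  calc (x - y) * (exp (s * x) - exp (s * y))
      ≤ |x - y| * |exp (s * x) - exp (s * y)| := by rw [← abs_mul]; exact le_abs_self _
    _ ≤ |x - y| * (|s * x - s * y| * ((exp (s * x) + exp (s * y)) / 2)) := by
        gcongr; exact abs_exp_sub_exp_le _ _
    _ = s / 2 * ((x - y) ^ 2 * exp (s * x) + (x - y) ^ 2 * exp (s * y)) := by
        rw [← mul_sub, abs_mul, abs_of_nonneg hs, ← sq_abs (x - y)]; ring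

lemma le_mul_exp_sub_of_deriv_le_mul {f g f' g' : ℝ → ℝ} {x₀ x : ℝ}
    (hf : ∀ y, HasDerivAt f (f' y) y) (hg : ∀ y, HasDerivAt g (g' y) y)
    (hfg : ∀ y, x₀ < y → f' y ≤ g' y * f y) (hx : x₀ ≤ x) :
    f x ≤ f x₀ * exp (g x - g x₀) := by
  have hd : ∀ y, HasDerivAt (fun y => f y * exp (-g y))
      (f' y * exp (-g y) + f y * (exp (-g y) * -g' y)) y :=
    fun y => (hf y).mul (hg y).neg.exp
  have hanti : AntitoneOn (fun y => f y * exp (-g y)) (Set.Ici x₀) := by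
    refine antitoneOn_of_deriv_nonpos (convex_Ici x₀)
      (fun y _ => (hd y).continuousAt.continuousWithinAt)
      (fun y _ => (hd y).differentiableAt.differentiableWithinAt) fun y hy => ?_
    rw [interior_Ici, Set.mem_Ioi] at hy
    rw [(hd y).deriv]
    linarith [mul_le_mul_of_nonneg_right (hfg y hy) (exp_pos (-g y)).le]
  calc f x = f x * exp (-g x) * exp (g x) := by rw [mul_assoc, ← exp_add]; simp
    _ ≤ f x₀ * exp (-g x₀) * exp (g x) := by
        gcongr ?_ * exp (g x); exact hanti Set.self_mem_Ici hx hx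
    _ = f x₀ * exp (g x - g x₀) := by rw [mul_assoc, ← exp_add]; ring_nf

lemma hasDerivAt_exp_mul_mul_sub_one {C : ℝ} (hC : C ≠ 0) (v s : ℝ) :
    HasDerivAt (fun s => v / C ^ 2 * (exp (C * s) * (C * s - 1) + 1)) (v * s * exp (C * s)) s := by
  have hlin : HasDerivAt (fun s : ℝ => C * s) C s := by simpa using (hasDerivAt_id s).const_mul C
  exact (((hlin.exp.mul (hlin.sub_const 1)).add_const 1).const_mul (v / C ^ 2)).congr_deriv
    (by field_simp; ring)

lemma exp_log_sub_log_log_mul_sub_one_add_one_le {t : ℝ} (ht : exp 1 ≤ t) :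
    exp (log t - log (log t)) * (log t - log (log t) - 1) + 1 ≤ t := by
  have ht₀ : 0 < t := (exp_pos 1).trans_le ht
  have hlog : 1 ≤ log t := (le_log_iff_exp_le ht₀).mpr ht
  have hlog₀ : 0 < log t := one_pos.trans_le hlog
  have hloglog : 0 ≤ log (log t) := log_nonneg hlog
  have hratio : 1 ≤ t / log t := by
    rw [one_le_div₀ hlog₀]; exact log_le_self ht₀.le
  rw [exp_sub, exp_log ht₀, exp_log hlog₀]
  calc t / log t * (log t - log (log t) - 1) + 1
      = t - t / log t * (1 + log (log t)) + 1 := by field_simp; ring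
    _ ≤ t - 1 * 1 + 1 := by gcongr; linarith
    _ = t := by ring

end RealInequalities

section MomentGeneratingFunction

variable {Ω : Type*} [MeasurableSpace Ω] {μ : Measure Ω} {X : Ω → ℝ} {v C : ℝ}

lemma mgf_le_exp_of_integral_mul_exp_le [IsProbabilityMeasure μ] (hC : C ≠ 0)
    (hX : ∀ s, Integrable (fun ω => exp (s * X ω)) μ)
    (h : ∀ s, 0 < s → μ[fun ω => X ω * exp (s * X ω)] ≤ v * s * exp (C * s) * mgf X μ s)
    {s : ℝ} (hs : 0 ≤ s) :
    mgf X μ s ≤ exp (v / C ^ 2 * (exp (C * s) * (C * s - 1) + 1)) := by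
  have hset : integrableExpSet X μ = Set.univ := Set.eq_univ_of_forall hX
  have hderiv : ∀ s, HasDerivAt (mgf X μ) (μ[fun ω => X ω * exp (s * X ω)]) s :=
    fun s => hasDerivAt_mgf (by simp [hset])
  simpa using le_mul_exp_sub_of_deriv_le_mul hderiv (hasDerivAt_exp_mul_mul_sub_one hC v) h hs

lemma measureReal_ge_le_exp_mul_log_of_mgf_le [IsFiniteMeasure μ] (hC : 0 < C) (hv : 0 ≤ v)
    (hX : ∀ s, 0 ≤ s → Integrable (fun ω => exp (s * X ω)) μ)
    (hmgf : ∀ s, 0 ≤ s → mgf X μ s ≤ exp (v / C ^ 2 * (exp (C * s) * (C * s - 1) + 1)))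
    {t : ℝ} (ht : exp 1 ≤ t) :
    μ.real {ω | t ≤ X ω} ≤ exp (-(t / C) * (log t - log (log t) - v / C)) := by
  set s := (log t - log (log t)) / C with hs_def
  have hlog : 0 ≤ log t := log_nonneg ((one_le_exp zero_le_one).trans ht)
  have hs : 0 ≤ s := div_nonneg (sub_nonneg.mpr (log_le_self hlog)) hC.le
  have hCs : C * s = log t - log (log t) := mul_div_cancel₀ _ hC.ne'
  calc μ.real {ω | t ≤ X ω}
      ≤ exp (-s * t) * mgf X μ s := measure_ge_le_exp_mul_mgf t hs (hX s hs)
    _ ≤ exp (-s * t) * exp (v / C ^ 2 * (exp (C * s) * (C * s - 1) + 1)) := by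
        gcongr; exact hmgf s hs
    _ ≤ exp (-s * t) * exp (v / C ^ 2 * t) := by
        rw [hCs]; gcongr; exact exp_log_sub_log_log_mul_sub_one_add_one_le ht
    _ = exp (-(t / C) * (log t - log (log t) - v / C)) := by
        rw [← exp_add, hs_def]; congr 1; field_simp; ring

end MomentGeneratingFunction

lemma sum_sub_comp_mul_exp_le {Ω : Type*} [Fintype Ω] {e : Ω → Ω} (he : Function.Involutive e)
    (W : Ω → ℝ) {s : ℝ} (hs : 0 ≤ s) :
    ∑ ω, (W ω - W (e ω)) * exp (s * W ω) ≤
      s / 2 * ∑ ω, (W ω - W (e ω)) ^ 2 * exp (s * W ω) := by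
  have hlin : ∑ ω, (W ω - W (e ω)) * exp (s * W ω) =
      -∑ ω, (W ω - W (e ω)) * exp (s * W (e ω)) := by
    rw [← Equiv.sum_comp he.toPerm, ← sum_neg_distrib]
    refine sum_congr rfl fun ω _ => ?_
    rw [he.coe_toPerm, he ω]; ring
  have hsq : ∑ ω, (W ω - W (e ω)) ^ 2 * exp (s * W ω) =
      ∑ ω, (W ω - W (e ω)) ^ 2 * exp (s * W (e ω)) := by
    rw [← Equiv.sum_comp he.toPerm]
    refine sum_congr rfl fun ω _ => ?_
    rw [he.coe_toPerm, he ω]; ring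
  have hsum := sum_le_sum fun ω (_ : ω ∈ univ) => sub_mul_exp_sub_exp_le hs (W ω) (W (e ω))
  simp only [mul_sub (W _ - W _), sum_sub_distrib, ← mul_sum, sum_add_distrib] at hsum
  rw [← hsq] at hsum
  linarith

lemma sum_sum_sub_sq {ι R : Type*} [Fintype ι] [CommRing R] (x : ι → R) :
    ∑ i, ∑ j, (x i - x j) ^ 2 = 2 * Fintype.card ι * ∑ i, x i ^ 2 - 2 * (∑ i, x i) ^ 2 := by
  simp only [sub_sq, sum_add_distrib, sum_sub_distrib, ← mul_sum, ← sum_mul, sum_const, card_univ,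
    nsmul_eq_mul]
  ring

/-- The Hoeffding permutation statistic `∑ i, a i (p i)` of a square array `a`, for an arbitrary
finite index type. -/
def hoeffdingStat {ι : Type*} [Fintype ι] (a : ι → ι → ℝ) (p : Perm ι) : ℝ :=
  ∑ i, a i (p i)

/-- The decrease of the Hoeffding statistic when rows `i` and `j`, assigned to columns `k` and `l`,
exchange their columns (a tetrad difference). -/
def swapDiff {ι : Type*} (a : ι → ι → ℝ) (i j k l : ι) : ℝ :=
  a i k + a j l - a i l - a j k

section Combinatorics

variable {ι : Type*} [Fintype ι]

lemma hoeffdingStat_neg (a : ι → ι → ℝ) (p : Perm ι) :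
    hoeffdingStat (-a) p = -hoeffdingStat a p := by
  simp [hoeffdingStat]

lemma sum_swapDiff (a : ι → ι → ℝ) (p : Perm ι) :
    ∑ i, ∑ j, swapDiff a i j (p i) (p j) =
      2 * (Fintype.card ι * hoeffdingStat a p - ∑ i, ∑ j, a i j) := by
  have hrow : ∑ i, ∑ j, a i (p j) = ∑ i, ∑ j, a i j :=
    sum_congr rfl fun i _ => Equiv.sum_comp p (a i)
  have hcol : ∑ i, ∑ j, a j (p i) = ∑ i, ∑ j, a i j := by rw [sum_comm, hrow]
  simp only [swapDiff, sum_add_distrib, sum_sub_distrib, hrow, hcol, sum_const, card_univ,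
    nsmul_eq_mul, ← mul_sum, hoeffdingStat]
  ring

lemma sum_swapDiff_sq {b : ι → ι → ℝ} (hrow : ∀ i, ∑ j, b i j = 0) (hcol : ∀ j, ∑ i, b i j = 0) :
    ∑ i, ∑ j, ∑ k, ∑ l, swapDiff b i j k l ^ 2 =
      4 * (Fintype.card ι : ℝ) ^ 2 * ∑ i, ∑ j, b i j ^ 2 := by
  have hsplit : ∀ i j k l, swapDiff b i j k l = (b i k - b j k) - (b i l - b j l) := by
    intro i j k l; rw [swapDiff]; ring
  have hcols : ∀ i j, ∑ k, ∑ l, swapDiff b i j k l ^ 2 =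
      2 * Fintype.card ι * ∑ k, (b i k - b j k) ^ 2 := by
    intro i j
    simp [hsplit, sum_sum_sub_sq (fun k => b i k - b j k), hrow]
  have hrows : ∀ k, ∑ i, ∑ j, (b i k - b j k) ^ 2 = 2 * Fintype.card ι * ∑ i, b i k ^ 2 := by
    intro k
    simp [sum_sum_sub_sq (fun i => b i k), hcol]
  calc ∑ i, ∑ j, ∑ k, ∑ l, swapDiff b i j k l ^ 2
      = 2 * Fintype.card ι * ∑ i, ∑ k, ∑ j, (b i k - b j k) ^ 2 := by
        simp only [hcols, ← mul_sum]
        congr 1; exact sum_congr rfl fun i _ => sum_comm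
    _ = 4 * (Fintype.card ι : ℝ) ^ 2 * ∑ i, ∑ j, b i j ^ 2 := by
        rw [sum_comm]
        simp only [hrows, ← mul_sum]
        rw [sum_comm]; ring

variable [DecidableEq ι]

lemma hoeffdingStat_sub_mul_swap (a : ι → ι → ℝ) (p : Perm ι) (i j : ι) :
    hoeffdingStat a p - hoeffdingStat a (p * swap i j) = swapDiff a i j (p i) (p j) := by
  rcases eq_or_ne i j with rfl | hij
  · simp [swapDiff, ← Perm.one_def]
  rw [hoeffdingStat, hoeffdingStat, ← sum_sub_distrib, Fintype.sum_eq_add i j hij]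
  · simp only [Perm.mul_apply, swap_apply_left, swap_apply_right, swapDiff]; ring
  · rintro x ⟨hxi, hxj⟩
    simp [swap_apply_of_ne_of_ne hxi hxj]

variable {a b : ι → ι → ℝ} {D s : ℝ}

lemma hoeffdingStat_le_swap_mul_add (hD : ∀ i j k l, swapDiff a i j k l ≤ D) (k l : ι)
    (p : Perm ι) : hoeffdingStat a p ≤ hoeffdingStat a (swap k l * p) + D := by
  have hconj : p * swap (p⁻¹ k) (p⁻¹ l) = swap k l * p := by simp [mul_swap_eq_swap_mul]
  have hdiff := hoeffdingStat_sub_mul_swap a p (p⁻¹ k) (p⁻¹ l)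
  rw [hconj] at hdiff
  linarith [hD (p⁻¹ k) (p⁻¹ l) (p (p⁻¹ k)) (p (p⁻¹ l))]

omit [DecidableEq ι] in
lemma exists_perm_map_pair_hoeffdingStat_le (hD : ∀ i j k l, swapDiff a i j k l ≤ D)
    {k l k' l' : ι} (hkl : k ≠ l) (hkl' : k' ≠ l') :
    ∃ τ : Perm ι, τ k = k' ∧ τ l = l' ∧
      ∀ p, hoeffdingStat a p ≤ hoeffdingStat a (τ * p) + 2 * D := by
  classical
  set m := swap k k' l with hm
  have hk'm : k' ≠ m := by
    simpa [hm] using (swap k k').injective.ne hkl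
  refine ⟨swap m l' * swap k k', ?_, ?_, fun p => ?_⟩
  · rw [Perm.mul_apply, swap_apply_left, swap_apply_of_ne_of_ne hk'm hkl']
  · rw [Perm.mul_apply, ← hm, swap_apply_left]
  · rw [mul_assoc]
    linarith [hoeffdingStat_le_swap_mul_add hD k k' p,
      hoeffdingStat_le_swap_mul_add hD m l' (swap k k' * p)]

lemma sum_exp_pair_fiber_le (hD : ∀ i j k l, swapDiff a i j k l ≤ D) (hs : 0 ≤ s) (i j : ι)
    {q q' : ι × ι} (hq : q ∈ univ.offDiag) (hq' : q' ∈ univ.offDiag) :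
    ∑ p : Perm ι with (p i, p j) = q, exp (s * hoeffdingStat a p) ≤
      exp (2 * D * s) * ∑ p : Perm ι with (p i, p j) = q', exp (s * hoeffdingStat a p) := by
  obtain ⟨τ, hk, hl, hτ⟩ := exists_perm_map_pair_hoeffdingStat_le hD
    (mem_offDiag.mp hq).2.2 (mem_offDiag.mp hq').2.2
  have hfiber : ∀ p : Perm ι, ((τ * p) i, (τ * p) j) = q' ↔ (p i, p j) = q := fun p => by
    simp only [Prod.ext_iff, Perm.mul_apply, ← hk, ← hl, τ.injective.eq_iff]
  calc ∑ p : Perm ι with (p i, p j) = q, exp (s * hoeffdingStat a p)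
      ≤ ∑ p : Perm ι with (p i, p j) = q,
          exp (2 * D * s) * exp (s * hoeffdingStat a (τ * p)) := by
        refine sum_le_sum fun p _ => ?_
        rw [← exp_add, exp_le_exp]
        linarith [mul_le_mul_of_nonneg_left (hτ p) hs]
    _ = exp (2 * D * s) * ∑ p : Perm ι with (p i, p j) = q', exp (s * hoeffdingStat a p) := by
        rw [← mul_sum]
        congr 1
        exact sum_equiv (Equiv.mulLeft τ) (fun p => by simp [← hfiber]) fun p _ => rfl

lemma sum_offDiag_sum_pair_fiber {M : Type*} [AddCommMonoid M] {i j : ι} (hij : i ≠ j)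
    (f : Perm ι → M) :
    ∑ q ∈ univ.offDiag, ∑ p : Perm ι with (p i, p j) = q, f p = ∑ p, f p :=
  sum_fiberwise_of_maps_to (fun p _ => by simpa using hij) f

lemma card_mul_sum_exp_pair_fiber_le (hD : ∀ i j k l, swapDiff a i j k l ≤ D) (hs : 0 ≤ s)
    {i j : ι} (hij : i ≠ j) {q : ι × ι} (hq : q ∈ univ.offDiag) :
    (Fintype.card ι : ℝ) * (Fintype.card ι - 1) *
        ∑ p : Perm ι with (p i, p j) = q, exp (s * hoeffdingStat a p) ≤
      exp (2 * D * s) * ∑ p : Perm ι, exp (s * hoeffdingStat a p) := by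
  have hcard : ((univ.offDiag : Finset (ι × ι)).card : ℝ) =
      (Fintype.card ι : ℝ) * (Fintype.card ι - 1) := by
    rw [offDiag_card, card_univ, Nat.cast_sub (Nat.le_mul_self _)]
    push_cast; ring
  rw [← hcard, ← nsmul_eq_mul, ← sum_const, ← sum_offDiag_sum_pair_fiber hij, mul_sum]
  exact sum_le_sum fun q' hq' => sum_exp_pair_fiber_le hD hs i j hq hq'

lemma card_mul_sum_mul_exp_le (hD : ∀ i j k l, swapDiff a i j k l ≤ D) (hs : 0 ≤ s)
    {i j : ι} (hij : i ≠ j) {F : ι × ι → ℝ} (hF : ∀ q, 0 ≤ F q) :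
    (Fintype.card ι : ℝ) * (Fintype.card ι - 1) *
        ∑ p : Perm ι, F (p i, p j) * exp (s * hoeffdingStat a p) ≤
      (∑ q, F q) * (exp (2 * D * s) * ∑ p : Perm ι, exp (s * hoeffdingStat a p)) := by
  have hfiber : ∑ p : Perm ι, F (p i, p j) * exp (s * hoeffdingStat a p) =
      ∑ q ∈ univ.offDiag, F q * ∑ p : Perm ι with (p i, p j) = q, exp (s * hoeffdingStat a p) := by
    rw [← sum_offDiag_sum_pair_fiber hij]
    refine sum_congr rfl fun q _ => ?_
    rw [mul_sum]
    exact sum_congr rfl fun p hp => by rw [(mem_filter.mp hp).2]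
  calc (Fintype.card ι : ℝ) * (Fintype.card ι - 1) *
        ∑ p : Perm ι, F (p i, p j) * exp (s * hoeffdingStat a p)
      = ∑ q ∈ univ.offDiag, F q * ((Fintype.card ι : ℝ) * (Fintype.card ι - 1) *
          ∑ p : Perm ι with (p i, p j) = q, exp (s * hoeffdingStat a p)) := by
        rw [hfiber, mul_sum]
        exact sum_congr rfl fun q _ => by ring
    _ ≤ ∑ q ∈ univ.offDiag,
          F q * (exp (2 * D * s) * ∑ p : Perm ι, exp (s * hoeffdingStat a p)) :=
        sum_le_sum fun q hq =>
          mul_le_mul_of_nonneg_left (card_mul_sum_exp_pair_fiber_le hD hs hij hq) (hF q)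
    _ ≤ (∑ q, F q) * (exp (2 * D * s) * ∑ p : Perm ι, exp (s * hoeffdingStat a p)) := by
        rw [← sum_mul]
        gcongr ?_ * _
        exact sum_le_sum_of_subset_of_nonneg (subset_univ _) fun q _ _ => hF q

lemma sum_swapDiff_mul_exp_le (hs : 0 ≤ s) (i j : ι) :
    ∑ p : Perm ι, swapDiff a i j (p i) (p j) * exp (s * hoeffdingStat a p) ≤
      s / 2 * ∑ p : Perm ι, swapDiff a i j (p i) (p j) ^ 2 * exp (s * hoeffdingStat a p) := by
  have hinv : Function.Involutive fun p : Perm ι => p * swap i j :=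
    fun p => by simp [mul_assoc]
  simpa only [hoeffdingStat_sub_mul_swap] using
    sum_sub_comp_mul_exp_le hinv (hoeffdingStat a) hs

lemma card_mul_sum_swapDiff_mul_exp_le (hD : ∀ i j k l, swapDiff a i j k l ≤ D) (hs : 0 ≤ s)
    (i j : ι) :
    (Fintype.card ι : ℝ) * (Fintype.card ι - 1) *
        ∑ p : Perm ι, swapDiff a i j (p i) (p j) * exp (s * hoeffdingStat a p) ≤
      s / 2 * ((∑ k, ∑ l, swapDiff a i j k l ^ 2) *
        (exp (2 * D * s) * ∑ p : Perm ι, exp (s * hoeffdingStat a p))) := by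
  rcases eq_or_ne i j with rfl | hij
  · simp [swapDiff]
  have : Nonempty ι := ⟨i⟩
  have hcard : (0 : ℝ) ≤ Fintype.card ι - 1 := by
    rw [sub_nonneg, Nat.one_le_cast]; exact Fintype.card_pos
  have hdecouple := card_mul_sum_mul_exp_le hD hs hij
    (F := fun q => swapDiff a i j q.1 q.2 ^ 2) fun q => sq_nonneg _
  rw [Fintype.sum_prod_type] at hdecouple
  calc _ ≤ (Fintype.card ι : ℝ) * (Fintype.card ι - 1) * (s / 2 *
        ∑ p : Perm ι, swapDiff a i j (p i) (p j) ^ 2 * exp (s * hoeffdingStat a p)) := by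
        gcongr; exact sum_swapDiff_mul_exp_le hs i j
    _ = s / 2 * ((Fintype.card ι : ℝ) * (Fintype.card ι - 1) *
        ∑ p : Perm ι, swapDiff a i j (p i) (p j) ^ 2 * exp (s * hoeffdingStat a p)) := by ring
    _ ≤ _ := by gcongr

lemma sum_sum_sum_swapDiff_mul_exp (hb : ∑ i, ∑ j, b i j = 0) (s : ℝ) :
    ∑ i, ∑ j, ∑ p : Perm ι, swapDiff b i j (p i) (p j) * exp (s * hoeffdingStat b p) =
      2 * Fintype.card ι * ∑ p : Perm ι, hoeffdingStat b p * exp (s * hoeffdingStat b p) := by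
  rw [sum_congr rfl fun i _ => sum_comm, sum_comm, mul_sum]
  refine sum_congr rfl fun p _ => ?_
  simp only [← sum_mul, sum_swapDiff, hb]
  ring

lemma sum_hoeffdingStat_mul_exp_le [Nontrivial ι] (hrow : ∀ i, ∑ j, b i j = 0)
    (hcol : ∀ j, ∑ i, b i j = 0) (hD : ∀ i j k l, swapDiff b i j k l ≤ D) (hs : 0 ≤ s) :
    ∑ p : Perm ι, hoeffdingStat b p * exp (s * hoeffdingStat b p) ≤
      (1 / ((Fintype.card ι : ℝ) - 1) * ∑ i, ∑ j, b i j ^ 2) * s * exp (2 * D * s) *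
        ∑ p : Perm ι, exp (s * hoeffdingStat b p) := by
  have hcard : (0 : ℝ) < Fintype.card ι - 1 := by
    rw [sub_pos, Nat.one_lt_cast]; exact Fintype.one_lt_card
  have hcard_sq : (0 : ℝ) < 2 * Fintype.card ι ^ 2 := by positivity
  have hsum := sum_le_sum fun i (_ : i ∈ univ) => sum_le_sum fun j (_ : j ∈ univ) =>
    card_mul_sum_swapDiff_mul_exp_le hD hs i j
  simp only [← mul_sum, ← sum_mul] at hsum
  rw [sum_sum_sum_swapDiff_mul_exp (by simp [hrow]), sum_swapDiff_sq hrow hcol] at hsum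
  have hcancel : ((Fintype.card ι : ℝ) - 1) *
        ∑ p : Perm ι, hoeffdingStat b p * exp (s * hoeffdingStat b p) ≤
      (∑ i, ∑ j, b i j ^ 2) * s * exp (2 * D * s) * ∑ p : Perm ι, exp (s * hoeffdingStat b p) :=
    le_of_mul_le_mul_left (by linarith) hcard_sq
  rw [← le_div_iff₀' hcard] at hcancel
  exact hcancel.trans_eq (by ring)

end Combinatorics

instance (n : ℕ) : DiscreteMeasurableSpace (Perm (Fin n)) :=
  ⟨fun _ => MeasurableSpace.measurableSet_top⟩

instance (n : ℕ) : IsProbabilityMeasure (uniformPerm n) :=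
  PMF.toMeasure.isProbabilityMeasure _

lemma integral_uniformPerm (n : ℕ) (f : Perm (Fin n) → ℝ) :
    ∫ p, f p ∂uniformPerm n = (n.factorial : ℝ)⁻¹ * ∑ p, f p := by
  simp [uniformPerm, PMF.integral_eq_sum, Fintype.card_perm, mul_sum]

section Tail

variable {n : ℕ} {b : Fin n → Fin n → ℝ} {D : ℝ}

lemma integral_hoeffdingStat_mul_exp_le (hn : 2 ≤ n) (hrow : ∀ i, ∑ j, b i j = 0)
    (hcol : ∀ j, ∑ i, b i j = 0) (hD : ∀ i j k l, swapDiff b i j k l ≤ D) {s : ℝ} (hs : 0 ≤ s) :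
    (uniformPerm n)[fun p => hoeffdingStat b p * exp (s * hoeffdingStat b p)] ≤
      (1 / ((n : ℝ) - 1) * ∑ i, ∑ j, b i j ^ 2) * s * exp (2 * D * s) *
        mgf (hoeffdingStat b) (uniformPerm n) s := by
  have : Nontrivial (Fin n) := Fin.nontrivial_iff_two_le.mpr hn
  have hsum := sum_hoeffdingStat_mul_exp_le hrow hcol hD hs
  rw [Fintype.card_fin] at hsum
  rw [mgf, integral_uniformPerm, integral_uniformPerm, mul_left_comm]
  gcongr

lemma measureReal_hoeffdingStat_ge_le (hn : 2 ≤ n) (hrow : ∀ i, ∑ j, b i j = 0)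
    (hcol : ∀ j, ∑ i, b i j = 0) (hD₀ : 0 < D) (hD : ∀ i j k l, swapDiff b i j k l ≤ D)
    {t : ℝ} (ht : exp 1 ≤ t) :
    (uniformPerm n).real {p | t ≤ hoeffdingStat b p} ≤
      exp (-(t / (2 * D)) * (log t - log (log t) -
        (1 / ((n : ℝ) - 1) * ∑ i, ∑ j, b i j ^ 2) / (2 * D))) := by
  have hC : 0 < 2 * D := by positivity
  have hn₁ : (0 : ℝ) ≤ n - 1 := by
    rw [sub_nonneg, Nat.one_le_cast]; exact one_le_two.trans hn
  exact measureReal_ge_le_exp_mul_log_of_mgf_le hC (by positivity)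
    (fun _ _ => .of_finite)
    (fun _ => mgf_le_exp_of_integral_mul_exp_le hC.ne' (fun _ => .of_finite)
      fun _ hs => integral_hoeffdingStat_mul_exp_le hn hrow hcol hD hs.le) ht

end Tail

section Centering

variable {n : ℕ} (a : Fin n → Fin n → ℝ)

/-- The doubly centered array `a_{ij} - a_{i·} - a_{·j} + a_{··}`, whose row and column sums
vanish. -/
noncomputable def doubleCenter (i j : Fin n) : ℝ :=
  a i j - rowMean n a i - colMean n a j + grandMean n a

lemma sum_doubleCenter_row (i : Fin n) : ∑ j, doubleCenter a i j = 0 := by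
  have hn : (n : ℝ) ≠ 0 := Nat.cast_ne_zero.mpr i.pos.ne'
  have hcomm : ∑ j, ∑ i, a i j = ∑ i, ∑ j, a i j := sum_comm
  simp only [doubleCenter, sum_add_distrib, sum_sub_distrib, rowMean, colMean, grandMean,
    sum_const, card_univ, Fintype.card_fin, nsmul_eq_mul, ← mul_sum, hcomm]
  field_simp
  ring

lemma sum_doubleCenter_col (j : Fin n) : ∑ i, doubleCenter a i j = 0 := by
  have hn : (n : ℝ) ≠ 0 := Nat.cast_ne_zero.mpr j.pos.ne'
  simp only [doubleCenter, sum_add_distrib, sum_sub_distrib, rowMean, colMean, grandMean,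
    sum_const, card_univ, Fintype.card_fin, nsmul_eq_mul, ← mul_sum]
  field_simp
  ring

lemma sigmaA2_eq_sum_doubleCenter_sq :
    sigmaA2 n a = 1 / ((n : ℝ) - 1) * ∑ i, ∑ j, doubleCenter a i j ^ 2 :=
  rfl

lemma swapDiff_doubleCenter (i j k l : Fin n) :
    swapDiff (doubleCenter a) i j k l = swapDiff a i j k l := by
  simp only [swapDiff, doubleCenter]
  ring

lemma hoeffdingStat_doubleCenter (p : Perm (Fin n)) :
    hoeffdingStat (doubleCenter a) p = hoeffdingStat a p - muA n a := by
  rcases eq_or_ne n 0 with rfl | hn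
  · simp [hoeffdingStat, muA]
  have hcomm : ∑ j, ∑ i, a i j = ∑ i, ∑ j, a i j := sum_comm
  simp only [hoeffdingStat, doubleCenter, sum_add_distrib, sum_sub_distrib]
  rw [Equiv.sum_comp p (colMean n a)]
  simp only [rowMean, colMean, grandMean, muA, sum_const, card_univ, Fintype.card_fin,
    nsmul_eq_mul, ← mul_sum, hcomm]
  field_simp
  ring

lemma swapDiff_le_of_abs_sub_rowMean_le {a : Fin n → Fin n → ℝ} {K : ℝ}
    (hK : ∀ i j, |a i j - rowMean n a i| ≤ K) (i j k l : Fin n) : swapDiff a i j k l ≤ 4 * K := by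
  rw [swapDiff]
  linarith [le_of_abs_le (hK i k), le_of_abs_le (hK j l), neg_le_of_abs_le (hK i l),
    neg_le_of_abs_le (hK j k)]

end Centering

theorem hoeffding_concentration_tlogt_general {n : ℕ} (hn : 2 ≤ n) {a : Fin n → Fin n → ℝ}
    {D : ℝ} (hD₀ : 0 < D) (hD : ∀ i j k l, swapDiff a i j k l ≤ D) {t : ℝ} (ht : exp 1 ≤ t) :
    (uniformPerm n).real {p | t ≤ hoeffdingStat a p - muA n a} ≤
        exp (-(t / (2 * D)) * (log t - log (log t) - sigmaA2 n a / (2 * D))) ∧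
      (uniformPerm n).real {p | hoeffdingStat a p - muA n a ≤ -t} ≤
        exp (-(t / (2 * D)) * (log t - log (log t) - sigmaA2 n a / (2 * D))) := by
  simp_rw [← hoeffdingStat_doubleCenter, sigmaA2_eq_sum_doubleCenter_sq]
  set b := doubleCenter a
  have hrow : ∀ i, ∑ j, b i j = 0 := sum_doubleCenter_row a
  have hcol : ∀ j, ∑ i, b i j = 0 := sum_doubleCenter_col a
  have hDb : ∀ i j k l, swapDiff b i j k l ≤ D :=
    fun i j k l => (swapDiff_doubleCenter a i j k l).trans_le (hD i j k l)
  have hDb_neg : ∀ i j k l, swapDiff (-b) i j k l ≤ D := fun i j k l =>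
    le_of_eq_of_le (by simp only [swapDiff, Pi.neg_apply]; ring) (hDb i j l k)
  constructor
  · exact measureReal_hoeffdingStat_ge_le hn hrow hcol hD₀ hDb ht
  · simpa only [hoeffdingStat_neg, le_neg, Pi.neg_apply, neg_sq] using
      measureReal_hoeffdingStat_ge_le (b := -b) hn (by simp [hrow]) (by simp [hcol])
        hD₀ hDb_neg ht

theorem hoeffding_concentration_tlogt (n : ℕ) (hn : 3 ≤ n) (a : Fin n → Fin n → ℝ)
    (hσ : 0 < sigmaA2 n a)
    (normA : ℝ) (hnormpos : 0 < normA)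
    (hnorm : IsGreatest {x : ℝ | ∃ i j, x = |a i j - rowMean n a i|} normA) :
    ∀ t : ℝ, Real.exp 1 < t →
      ((uniformPerm n) {p | t ≤ (∑ i, a i (p i)) - muA n a}).toReal ≤
          Real.exp (-(t / (8 * normA)) *
            (Real.log t - Real.log (Real.log t) - sigmaA2 n a / (8 * normA))) ∧
        ((uniformPerm n) {p | (∑ i, a i (p i)) - muA n a ≤ -t}).toReal ≤
          Real.exp (-(t / (8 * normA)) *
            (Real.log t - Real.log (Real.log t) - sigmaA2 n a / (8 * normA))) := by
  intro t ht
  have hswap := swapDiff_le_of_abs_sub_rowMean_le fun i j => hnorm.2 ⟨i, j, rfl⟩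
  have hconst : 8 * normA = 2 * (4 * normA) := by ring
  rw [hconst]
  exact hoeffding_concentration_tlogt_general (by omega) (by positivity) hswap ht.le
end

section
/- Let n ≥ 5 be even and let (a_{ij})_{1≤i,j≤n} be a real array satisfying a_{ij} = a_{ji} for all i ≠ j, with σ_ι² > 0. Let π be chosen uniformly at random from the set of fixed point free involutions of {1,…,n} (permutations all of whose cycles have length 2), and let Y = Σ_{i=1}^n a_{iπ(i)}. Then for all t ≥ 0, both P(Y − μ ≥ t) and P(Y − μ ≤ −t) are at most exp(−t² / (2(σ_ι² + 24 a_o t))), where μ = (n−2) a_{oo}, σ_ι² = (2(n−2)/((n−1)(n−3))) Σ_{i≠j} (a_{ij} − 2a_{io} + a_{oo})², and a_o = max_{i≠j} |a_{ij} − 2a_{io} + a_{oo}|. -/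
open MeasureTheory ProbabilityTheory Real

instance (n : ℕ) : MeasurableSingletonClass (Equiv.Perm (Fin n)) := ⟨fun _ => trivial⟩

/-- The set of fixed point free involutions of `{1,…,n}`: permutations all of whose
cycles have length two. -/
def fpfInvolutions (n : ℕ) : Set (Equiv.Perm (Fin n)) :=
  {p | ∀ i, p i ≠ i ∧ p (p i) = i}

/-- `a_{io} = (1/(n-2)) ∑_{j ≠ i} a_{ij}`. -/
noncomputable def aio (n : ℕ) (a : Fin n → Fin n → ℝ) (i : Fin n) : ℝ :=
  (1 / ((n : ℝ) - 2)) * ∑ j ∈ Finset.univ.filter (· ≠ i), a i j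

/-- `a_{oo} = (1/((n-1)(n-2))) ∑_{i ≠ j} a_{ij}`. -/
noncomputable def aoo (n : ℕ) (a : Fin n → Fin n → ℝ) : ℝ :=
  (1 / (((n : ℝ) - 1) * ((n : ℝ) - 2))) * ∑ i, ∑ j ∈ Finset.univ.filter (· ≠ i), a i j

/-- The variance `σ_ι²` of the Hoeffding statistic over uniform fixed point free
involutions. -/
noncomputable def sigmaIota2 (n : ℕ) (a : Fin n → Fin n → ℝ) : ℝ :=
  (2 * ((n : ℝ) - 2) / (((n : ℝ) - 1) * ((n : ℝ) - 3))) *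
    ∑ i, ∑ j ∈ Finset.univ.filter (· ≠ i), (a i j - 2 * aio n a i + aoo n a) ^ 2

/-!
Conjugating a uniform fixed point free involution `π` by the transposition of `i` and `j` gives an
exchangeable pair. Replacing `a` by a symmetric array `d` with zero diagonal and zero row sums
subtracts the mean from `Y` and does not increase `σ_ι²`. For the Hoeffding sum `W` of `d`, the
decrease of `W` under the conjugation, summed over all `i` and `j`, is `4 (n - 1) W`, so that
exchangeability bounds `E[W exp (θ W)]` by `θ exp (8 A θ)` times a sum of second moments of the
changes, weighted by `exp (θ W)`; here `A` bounds the entries of `d`. The change depends only on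
`π i` and `π j`. Conjugations, each changing `W` by at most `8 A`, permute the possible values of
this pair, hence tilting by `exp (θ W)` raises its probabilities by at most a factor
`exp (16 A θ)`. Altogether `E[W exp (θ W)] ≤ σ_ι² θ exp (24 A θ) E[exp (θ W)]`. Integrating this
bound on the derivative of the cumulant generating function, the Chernoff bound with
`θ = t / (σ_ι² + 24 A t)` gives both tails.
-/

section Probability

open Finset

variable {Ω : Type*} {mΩ : MeasurableSpace Ω}

lemma cgf_le_of_deriv_cgf_le {μ : Measure Ω} [IsProbabilityMeasure μ] {X : Ω → ℝ}
    (hX : ∀ θ, Integrable (fun ω ↦ exp (θ * X ω)) μ) {v c θ : ℝ} (hv : 0 ≤ v) (hc : 0 ≤ c)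
    (hderiv : ∀ u, 0 ≤ u → deriv (cgf X μ) u ≤ v * u * exp (c * u))
    (hθ : 0 ≤ θ) (hcθ : c * θ < 1) :
    cgf X μ θ ≤ v / (1 - c * θ) * θ ^ 2 / 2 := by
  set K := v / (1 - c * θ)
  have hX' (u : ℝ) : u ∈ interior (integrableExpSet X μ) := by
    rw [Set.eq_univ_of_forall (s := integrableExpSet X μ) hX]
    simp
  have hasDerivAt_diff (u : ℝ) :
      HasDerivAt (fun u ↦ cgf X μ u - K * u ^ 2 / 2) (deriv (cgf X μ) u - K * u) u := by
    convert! (analyticAt_cgf (hX' u)).differentiableAt.hasDerivAt.sub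
      (((hasDerivAt_pow 2 u).const_mul K).div_const 2) using 1
    simp only [Nat.cast_ofNat, Nat.add_one_sub_one, pow_one]
    ring
  have deriv_le {u : ℝ} (hu : u ∈ Set.Ioo 0 θ) : deriv (cgf X μ) u ≤ K * u := by
    have hu₀ : 0 ≤ u := hu.1.le
    have exp_le : exp (c * u) ≤ (1 - c * θ)⁻¹ := by
      rw [← inv_inv (exp (c * u)), ← exp_neg]
      refine inv_anti₀ (by linarith) ?_
      linarith [add_one_le_exp (-(c * u)), mul_le_mul_of_nonneg_left hu.2.le hc]
    calc deriv (cgf X μ) u ≤ v * u * exp (c * u) := hderiv u hu₀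
      _ ≤ v * u * (1 - c * θ)⁻¹ := by gcongr
      _ = K * u := by simp only [K]; ring
  have antitone_diff : AntitoneOn (fun u ↦ cgf X μ u - K * u ^ 2 / 2) (Set.Icc 0 θ) := by
    refine antitoneOn_of_deriv_nonpos (convex_Icc 0 θ)
      (fun u _ ↦ (hasDerivAt_diff u).continuousAt.continuousWithinAt)
      (fun u _ ↦ (hasDerivAt_diff u).differentiableAt.differentiableWithinAt) fun u hu ↦ ?_
    rw [interior_Icc] at hu
    rw [(hasDerivAt_diff u).deriv]
    linarith [deriv_le hu]
  simpa using antitone_diff (Set.left_mem_Icc.2 hθ) (Set.right_mem_Icc.2 hθ) hθ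

theorem measureReal_ge_le_of_deriv_cgf_le {μ : Measure Ω} [IsProbabilityMeasure μ] {X : Ω → ℝ}
    (hX : ∀ θ, Integrable (fun ω ↦ exp (θ * X ω)) μ) {v c t : ℝ} (hv : 0 < v) (hc : 0 ≤ c)
    (hderiv : ∀ θ, 0 ≤ θ → deriv (cgf X μ) θ ≤ v * θ * exp (c * θ)) (ht : 0 ≤ t) :
    μ.real {ω | t ≤ X ω} ≤ exp (-(t ^ 2) / (2 * (v + c * t))) := by
  set θ := t / (v + c * t)
  have : 0 < v + c * t := by positivity
  have hθ : 0 ≤ θ := by positivity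
  have one_sub : 1 - c * θ = v / (v + c * t) := by
    simp only [θ]
    field_simp
    ring
  have hcθ : c * θ < 1 := by
    have : 0 < v / (v + c * t) := by positivity
    linarith
  calc μ.real {ω | t ≤ X ω} ≤ exp (-θ * t + cgf X μ θ) := measure_ge_le_exp_cgf t hθ (hX θ)
    _ ≤ exp (-θ * t + v / (1 - c * θ) * θ ^ 2 / 2) := by
      gcongr
      exact cgf_le_of_deriv_cgf_le hX hv.le hc hderiv hθ hcθ
    _ = exp (-(t ^ 2) / (2 * (v + c * t))) := by
      rw [one_sub]
      simp only [θ]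
      congr 1
      field_simp
      ring

variable [MeasurableSingletonClass Ω]

lemma integrableOn_count_finset (s : Finset Ω) (f : Ω → ℝ) :
    IntegrableOn f s Measure.count := by
  have : IsFiniteMeasure (Measure.count.restrict (s : Set Ω)) := ⟨by simp⟩
  have h := IntegrableOn.finset (μ := Measure.count.restrict s) (s := s) (f := f)
  rwa [IntegrableOn, Measure.restrict_restrict s.measurableSet, Set.inter_self] at h

lemma integral_uniformOn_finset (s : Finset Ω) (f : Ω → ℝ) :
    ∫ ω, f ω ∂uniformOn (s : Set Ω) = (∑ ω ∈ s, f ω) / #s := by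
  rw [uniformOn, ProbabilityTheory.cond, integral_smul_measure, Measure.count_apply_finset,
    setIntegral_finset s (integrableOn_count_finset s f)]
  simp [div_eq_inv_mul, measureReal_def]

lemma uniformOn_setOf_congr {s : Set Ω} (hs : s.Finite) {P Q : Ω → Prop}
    (hPQ : ∀ ω ∈ s, (P ω ↔ Q ω)) : uniformOn s {ω | P ω} = uniformOn s {ω | Q ω} := by
  rw [← uniformOn_inter_self hs, ← uniformOn_inter_self hs (t := {ω | Q ω})]
  congr 1
  ext ω
  simp +contextual [hPQ]

lemma deriv_cgf_uniformOn_finset {s : Finset Ω} (hs : s.Nonempty) (X : Ω → ℝ) (θ : ℝ) :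
    deriv (cgf X (uniformOn (s : Set Ω))) θ =
      (∑ ω ∈ s, X ω * exp (θ * X ω)) / ∑ ω ∈ s, exp (θ * X ω) := by
  have hset : integrableExpSet X (uniformOn (s : Set Ω)) = Set.univ :=
    Set.eq_univ_of_forall fun _ ↦ (integrableOn_count_finset s _).smul_measure
      (ENNReal.inv_ne_top.2 (Measure.count_ne_zero hs))
  have hcard : (#s : ℝ) ≠ 0 := by exact_mod_cast hs.card_pos.ne'
  rw [deriv_cgf (by simp [hset]), mgf, integral_uniformOn_finset, integral_uniformOn_finset,
    div_div_div_cancel_right₀ hcard]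

end Probability

section FixedPointFreeInvolutions

open Equiv Finset

variable {ι : Type*} [DecidableEq ι]

/-- The conjugate of `p` by the transposition of `i` and `j`; together with a uniform fixed point
free involution `p` it forms an exchangeable pair. -/
def conjSwap (i j : ι) (p : Perm ι) : Perm ι := swap i j * p * swap i j

lemma conjSwap_apply (i j : ι) (p : Perm ι) (k : ι) :
    conjSwap i j p k = swap i j (p (swap i j k)) :=
  rfl

lemma conjSwap_self (i : ι) (p : Perm ι) : conjSwap i i p = p := by
  ext k
  simp [conjSwap_apply]

lemma conjSwap_involutive (i j : ι) : Function.Involutive (conjSwap i j) := fun p ↦ by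
  ext k
  simp [conjSwap_apply]

variable [Fintype ι]

variable (ι) in
/-- The fixed point free involutions of a finite type, as a `Finset` to sum over. -/
def fpfInvolutionFinset : Finset (Perm ι) := {p | ∀ i, p i ≠ i ∧ p (p i) = i}

lemma mem_fpfInvolutionFinset {p : Perm ι} :
    p ∈ fpfInvolutionFinset ι ↔ ∀ i, p i ≠ i ∧ p (p i) = i := by
  simp [fpfInvolutionFinset]

lemma fpfInvolutionFinset_nonempty (hι : Even (Fintype.card ι)) :
    (fpfInvolutionFinset ι).Nonempty := by
  let e := Fintype.equivFin ι
  refine ⟨e.trans (Fin.revPerm.trans e.symm), mem_fpfInvolutionFinset.2 fun i ↦ ⟨fun h ↦ ?_, ?_⟩⟩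
  · have hrev : (e i).rev = e i := e.symm_apply_eq.1 h
    have := Fin.val_rev (e i) ▸ congrArg Fin.val hrev
    grind
  · simp

lemma apply_ne_of_mem_fpf {p : Perm ι} (hp : p ∈ fpfInvolutionFinset ι) (i : ι) : p i ≠ i :=
  (mem_fpfInvolutionFinset.1 hp i).1

lemma apply_apply_of_mem_fpf {p : Perm ι} (hp : p ∈ fpfInvolutionFinset ι) (i : ι) :
    p (p i) = i :=
  (mem_fpfInvolutionFinset.1 hp i).2

lemma apply_eq_comm_of_mem_fpf {p : Perm ι} (hp : p ∈ fpfInvolutionFinset ι) {i j : ι} :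
    p i = j ↔ p j = i := by
  constructor <;> rintro rfl <;> exact apply_apply_of_mem_fpf hp _

lemma conjSwap_mem_fpf (i j : ι) {p : Perm ι} (hp : p ∈ fpfInvolutionFinset ι) :
    conjSwap i j p ∈ fpfInvolutionFinset ι := by
  refine mem_fpfInvolutionFinset.2 fun k ↦ ⟨?_, ?_⟩
  · rw [conjSwap_apply, Ne, swap_apply_eq_iff]
    exact apply_ne_of_mem_fpf hp _
  · simp [conjSwap_apply, apply_apply_of_mem_fpf hp]

lemma conjSwap_eq_self {p : Perm ι} (hp : p ∈ fpfInvolutionFinset ι) {i j : ι} (hij : p i = j) :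
    conjSwap i j p = p := by
  have hji : p j = i := (apply_eq_comm_of_mem_fpf hp).1 hij
  rw [conjSwap, mul_assoc, mul_swap_eq_swap_mul, hij, hji, swap_comm, swap_mul_self_mul]

end FixedPointFreeInvolutions

section HoeffdingSum

open Equiv Finset

variable {ι : Type*}

/-- The second difference `d_{ik} - d_{jk} - d_{il} + d_{jl}`; half of the change of the Hoeffding
sum under `conjSwap i j` when `i` is paired with `k` and `j` with `l`. -/
def crossDiff (d : ι → ι → ℝ) (i j k l : ι) : ℝ := (d i k - d j k) - (d i l - d j l)

lemma abs_crossDiff_le {d : ι → ι → ℝ} {A : ℝ} (hA : ∀ i j, |d i j| ≤ A) (i j k l : ι) :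
    |crossDiff d i j k l| ≤ 4 * A := by
  have hik := abs_le.1 (hA i k)
  have hjk := abs_le.1 (hA j k)
  have hil := abs_le.1 (hA i l)
  have hjl := abs_le.1 (hA j l)
  rw [crossDiff, abs_le]
  constructor <;> linarith

variable [Fintype ι]

/-- The Hoeffding permutation statistic `Y = ∑ i, a_{i π(i)}`. -/
def hoeffdingSum (a : ι → ι → ℝ) (p : Perm ι) : ℝ := ∑ i, a i (p i)

lemma hoeffdingSum_neg (a : ι → ι → ℝ) (p : Perm ι) :
    hoeffdingSum (-a) p = -hoeffdingSum a p := by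
  simp [hoeffdingSum]

variable [DecidableEq ι]

lemma hoeffdingSum_conjSwap (d : ι → ι → ℝ) (i j : ι) (p : Perm ι) :
    hoeffdingSum d (conjSwap i j p) = ∑ k, d (swap i j k) (swap i j (p k)) := by
  rw [hoeffdingSum, ← Equiv.sum_comp (swap i j)]
  simp [conjSwap_apply]

lemma hoeffdingSum_sub_conjSwap {d : ι → ι → ℝ} (hd : ∀ i j, d i j = d j i) {p : Perm ι}
    (hp : p ∈ fpfInvolutionFinset ι) {i j : ι} (hij : i ≠ j) (hpi : p i ≠ j) :
    hoeffdingSum d p - hoeffdingSum d (conjSwap i j p) = 2 * crossDiff d i j (p i) (p j) := by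
  have hpj : p j ≠ i := fun h ↦ hpi ((apply_eq_comm_of_mem_fpf hp).1 h)
  have hi := apply_ne_of_mem_fpf hp i
  have hj := apply_ne_of_mem_fpf hp j
  have hp₂ := apply_apply_of_mem_fpf hp
  rw [hoeffdingSum_conjSwap, hoeffdingSum, ← sum_sub_distrib,
    ← sum_subset (subset_univ {i, j, p i, p j})]
  · rw [sum_insert (by simp [hij, hi.symm, hpj.symm]), sum_insert (by simp [hpi.symm, hj.symm]),
      sum_pair (p.injective.ne hij)]
    simp only [hp₂, swap_apply_left, swap_apply_right, swap_apply_of_ne_of_ne hi hpi,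
      swap_apply_of_ne_of_ne hpj hj, crossDiff]
    rw [hd (p i) i, hd (p i) j, hd (p j) j, hd (p j) i]
    ring
  · intro k _ hk
    simp only [mem_insert, mem_singleton, not_or] at hk
    obtain ⟨hki, hkj, hkpi, hkpj⟩ := hk
    rw [swap_apply_of_ne_of_ne hki hkj, sub_eq_zero, swap_apply_of_ne_of_ne]
    · exact fun h ↦ hkpi ((apply_eq_comm_of_mem_fpf hp).1 h).symm
    · exact fun h ↦ hkpj ((apply_eq_comm_of_mem_fpf hp).1 h).symm

lemma abs_hoeffdingSum_sub_conjSwap_le {d : ι → ι → ℝ} (hd : ∀ i j, d i j = d j i) {A : ℝ}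
    (hA : ∀ i j, |d i j| ≤ A) {p : Perm ι} (hp : p ∈ fpfInvolutionFinset ι) (i j : ι) :
    |hoeffdingSum d p - hoeffdingSum d (conjSwap i j p)| ≤ 8 * A := by
  have hA₀ : 0 ≤ A := (abs_nonneg _).trans (hA i j)
  by_cases hij : i = j
  · simp [hij, conjSwap_self, hA₀]
  by_cases hpi : p i = j
  · simp [conjSwap_eq_self hp hpi, hA₀]
  rw [hoeffdingSum_sub_conjSwap hd hp hij hpi, abs_mul, abs_two]
  linarith [abs_crossDiff_le hA i j (p i) (p j)]

end HoeffdingSum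

section CenteredArrays

open Equiv Finset

lemma sum_sum_sub_sq_of_sum_eq_zero {α : Type*} {s : Finset α} {f : α → ℝ}
    (hf : ∑ i ∈ s, f i = 0) :
    ∑ i ∈ s, ∑ j ∈ s, (f i - f j) ^ 2 = 2 * #s * ∑ i ∈ s, f i ^ 2 := by
  simp only [sub_sq, sum_add_distrib, sum_sub_distrib, ← mul_sum, hf, sum_const, nsmul_eq_mul,
    mul_zero, sub_zero]
  ring

/-- Symmetric arrays with zero diagonal and zero row sums, the normal form of the array of a
Hoeffding sum over fixed point free involutions. -/
structure IsCenteredArray {ι : Type*} [Fintype ι] (d : ι → ι → ℝ) : Prop where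
  symm (i j : ι) : d i j = d j i
  diag (i : ι) : d i i = 0
  row_sum (i : ι) : ∑ j, d i j = 0

namespace IsCenteredArray

variable {ι : Type*} [Fintype ι] {d : ι → ι → ℝ}

protected lemma neg (hd : IsCenteredArray d) : IsCenteredArray (-d) where
  symm i j := by simp [hd.symm i j]
  diag i := by simp [hd.diag i]
  row_sum i := by simp [hd.row_sum i]

lemma col_sum (hd : IsCenteredArray d) (j : ι) : ∑ i, d i j = 0 := by
  simpa only [hd.symm] using hd.row_sum j

variable [DecidableEq ι]

lemma hoeffdingSum_sub_conjSwap (hd : IsCenteredArray d) {p : Perm ι}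
    (hp : p ∈ fpfInvolutionFinset ι) (i j : ι) :
    hoeffdingSum d p - hoeffdingSum d (conjSwap i j p) =
      2 * crossDiff d i j (p i) (p j) - if j = p i then 4 * d i (p i) else 0 := by
  by_cases hij : i = j
  · subst hij
    simp [conjSwap_self, crossDiff, (apply_ne_of_mem_fpf hp i).symm]
  by_cases hpi : p i = j
  · have hpj : p j = i := (apply_eq_comm_of_mem_fpf hp).1 hpi
    rw [conjSwap_eq_self hp hpi, if_pos hpi.symm, crossDiff, hpi, hpj, hd.diag, hd.diag,
      hd.symm j i]
    ring
  · rw [_root_.hoeffdingSum_sub_conjSwap hd.symm hp hij hpi, if_neg (Ne.symm hpi), sub_zero]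

/-- The linear regression property of the exchangeable pair. -/
lemma sum_hoeffdingSum_sub_conjSwap (hd : IsCenteredArray d) {p : Perm ι}
    (hp : p ∈ fpfInvolutionFinset ι) :
    ∑ i, ∑ j, (hoeffdingSum d p - hoeffdingSum d (conjSwap i j p)) =
      4 * ((Fintype.card ι : ℝ) - 1) * hoeffdingSum d p := by
  have hrow (i : ι) : ∑ j, d i (p j) = 0 := by rw [Equiv.sum_comp p (d i), hd.row_sum]
  have hdiag : ∑ j, d j (p j) = hoeffdingSum d p := rfl
  have sum_pairs (i : ι) : ∑ j, (hoeffdingSum d p - hoeffdingSum d (conjSwap i j p)) =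
      2 * (Fintype.card ι - 2) * d i (p i) + 2 * hoeffdingSum d p := by
    simp only [hd.hoeffdingSum_sub_conjSwap hp, sum_sub_distrib, ← mul_sum, sum_ite_eq', mem_univ,
      if_true, crossDiff, hd.col_sum, hrow, hdiag, sum_const, card_univ, nsmul_eq_mul]
    ring
  simp only [sum_pairs, sum_add_distrib, ← mul_sum, hdiag, sum_const, card_univ, nsmul_eq_mul]
  ring

lemma sum_compl_sq_crossDiff (hd : IsCenteredArray d) (i j : ι) :
    ∑ k ∈ {i, j}ᶜ, ∑ l ∈ {i, j}ᶜ, crossDiff d i j k l ^ 2 =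
      2 * ((Fintype.card ι : ℝ) - 2) * (∑ k, (d i k - d j k) ^ 2 - 2 * d i j ^ 2) := by
  by_cases hij : i = j
  · subst hij
    simp [crossDiff, hd.diag]
  have sum_compl_pair (f : ι → ℝ) : ∑ k ∈ {i, j}ᶜ, f k = ∑ k, f k - (f i + f j) := by
    rw [← sum_pair hij, eq_sub_iff_add_eq, sum_compl_add_sum]
  have card_compl_pair : (#({i, j}ᶜ : Finset ι) : ℝ) = Fintype.card ι - 2 := by
    rw [card_compl, Nat.cast_sub (card_le_univ _), card_pair hij, Nat.cast_ofNat]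
  have hzero : ∑ k ∈ {i, j}ᶜ, (d i k - d j k) = 0 := by
    rw [sum_compl_pair, sum_sub_distrib, hd.row_sum, hd.row_sum, hd.diag, hd.diag, hd.symm j i]
    ring
  simp only [crossDiff]
  rw [sum_sum_sub_sq_of_sum_eq_zero hzero, card_compl_pair, sum_compl_pair, hd.diag, hd.diag,
    hd.symm j i]
  ring

lemma sum_sum_compl_sq_crossDiff (hd : IsCenteredArray d) :
    ∑ i, ∑ j, ∑ k ∈ {i, j}ᶜ, ∑ l ∈ {i, j}ᶜ, crossDiff d i j k l ^ 2 =
      4 * ((Fintype.card ι : ℝ) - 1) * ((Fintype.card ι : ℝ) - 2) * ∑ i, ∑ j, d i j ^ 2 := by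
  have sum_sq_sub (i : ι) : ∑ j, ∑ k, (d i k - d j k) ^ 2 =
      Fintype.card ι * ∑ k, d i k ^ 2 + ∑ j, ∑ k, d j k ^ 2 := by
    have cross_eq_zero : ∑ j, ∑ k, 2 * d i k * d j k = 0 := by
      rw [sum_comm]
      simp only [← mul_sum, hd.col_sum, mul_zero, sum_const_zero]
    simp only [sub_sq, sum_add_distrib, sum_sub_distrib, cross_eq_zero, sum_const, card_univ,
      nsmul_eq_mul, sub_zero]
  simp only [hd.sum_compl_sq_crossDiff, ← mul_sum, sum_sub_distrib, sum_sq_sub, sum_add_distrib,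
    sum_const, card_univ, nsmul_eq_mul]
  ring

end IsCenteredArray

end CenteredArrays

section ExponentialTilting

open Equiv Finset

lemma exp_sub_exp_le (u v : ℝ) : exp u - exp v ≤ (u - v) * exp u := by
  have hv : exp v = exp u * exp (v - u) := by rw [← exp_add, add_sub_cancel]
  have hexp := mul_le_mul_of_nonneg_left (add_one_le_exp (v - u)) (exp_pos u).le
  rw [hv]
  linarith

lemma sub_mul_exp_sub_exp_le_s14 {x y C θ : ℝ} (hxy : |x - y| ≤ C) (hθ : 0 ≤ θ) :
    (x - y) * (exp (θ * x) - exp (θ * y)) ≤ θ * exp (C * θ) * ((x - y) ^ 2 * exp (θ * x)) := by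
  have sub_exp_le {u v : ℝ} (hvu : v ≤ u) (hu : exp (θ * u) ≤ exp (C * θ) * exp (θ * x)) :
      (u - v) * (exp (θ * u) - exp (θ * v)) ≤ θ * exp (C * θ) * ((u - v) ^ 2 * exp (θ * x)) :=
    have : 0 ≤ u - v := sub_nonneg.2 hvu
    calc (u - v) * (exp (θ * u) - exp (θ * v))
        ≤ (u - v) * ((θ * u - θ * v) * exp (θ * u)) := by gcongr; exact exp_sub_exp_le _ _
      _ = θ * (u - v) ^ 2 * exp (θ * u) := by ring
      _ ≤ θ * (u - v) ^ 2 * (exp (C * θ) * exp (θ * x)) := by gcongr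
      _ = θ * exp (C * θ) * ((u - v) ^ 2 * exp (θ * x)) := by ring
  obtain ⟨hlower, hupper⟩ := abs_le.1 hxy
  rcases le_total y x with hyx | hyx
  · exact sub_exp_le hyx (le_mul_of_one_le_left (exp_pos _).le (one_le_exp (by nlinarith)))
  · have := sub_exp_le hyx (by rw [← exp_add, exp_le_exp]; nlinarith)
    rw [← neg_sub y x, ← neg_sub (exp (θ * y)), neg_mul_neg, neg_sq]
    exact this

lemma two_mul_sum_sub_mul_exp_le {α : Type*} {s : Finset α} {τ : α → α}
    (hτ : Function.Involutive τ) (hs : ∀ a ∈ s, τ a ∈ s) {X : α → ℝ} {C θ : ℝ}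
    (hX : ∀ a ∈ s, |X a - X (τ a)| ≤ C) (hθ : 0 ≤ θ) :
    2 * ∑ a ∈ s, (X a - X (τ a)) * exp (θ * X a) ≤
      θ * exp (C * θ) * ∑ a ∈ s, (X a - X (τ a)) ^ 2 * exp (θ * X a) := by
  have exchange : ∑ a ∈ s, (X a - X (τ a)) * exp (θ * X a) =
      ∑ a ∈ s, (X (τ a) - X a) * exp (θ * X (τ a)) :=
    sum_bij' (fun a _ ↦ τ a) (fun a _ ↦ τ a) hs hs (fun a _ ↦ hτ a) (fun a _ ↦ hτ a)
      fun a _ ↦ by rw [hτ a]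
  calc 2 * ∑ a ∈ s, (X a - X (τ a)) * exp (θ * X a)
      = ∑ a ∈ s, (X a - X (τ a)) * (exp (θ * X a) - exp (θ * X (τ a))) := by
        rw [two_mul]
        nth_rw 2 [exchange]
        rw [← sum_add_distrib]
        exact sum_congr rfl fun a _ ↦ by ring
    _ ≤ _ := by
        rw [mul_sum]
        exact sum_le_sum fun a ha ↦ sub_mul_exp_sub_exp_le_s14 (hX a ha) hθ

variable {ι : Type*} [Fintype ι] [DecidableEq ι]

/-- For `p i = k`, conjugation by `swap k l` moves the value at `i` to `l`, so up to the factor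
`exp (8 * A * θ)` the fibre over `k` is no heavier than any other fibre of `p ↦ p i`. -/
lemma card_mul_sum_fiber_exp_le {d : ι → ι → ℝ} (hd : ∀ i j, d i j = d j i) {A θ : ℝ}
    (hA : ∀ i j, |d i j| ≤ A) (hθ : 0 ≤ θ) {S : Finset (Perm ι)} (hS : S ⊆ fpfInvolutionFinset ι)
    {i k : ι} {K : Finset ι} (hK : ∀ p ∈ S, p i ∈ K) (hiK : i ∉ K) (hk : k ∈ K)
    (hconj : ∀ l ∈ K, ∀ p ∈ S, p i = k → conjSwap k l p ∈ S) :
    #K * ∑ p ∈ S with p i = k, exp (θ * hoeffdingSum d p) ≤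
      exp (8 * A * θ) * ∑ p ∈ S, exp (θ * hoeffdingSum d p) := by
  have sum_fiber_le (l : ι) (hl : l ∈ K) :
      ∑ p ∈ S with p i = k, exp (θ * hoeffdingSum d p) ≤
        exp (8 * A * θ) * ∑ p ∈ S with p i = l, exp (θ * hoeffdingSum d p) := by
    have image_subset : ({p ∈ S | p i = k}.image (conjSwap k l)) ⊆ {p ∈ S | p i = l} := by
      simp only [image_subset_iff, mem_filter]
      rintro p ⟨hp, hpi⟩
      refine ⟨hconj l hl p hp hpi, ?_⟩
      rw [conjSwap_apply, swap_apply_of_ne_of_ne (ne_of_mem_of_not_mem hk hiK).symm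
        (ne_of_mem_of_not_mem hl hiK).symm, hpi, swap_apply_left]
    calc ∑ p ∈ S with p i = k, exp (θ * hoeffdingSum d p)
        ≤ ∑ p ∈ S with p i = k,
            exp (8 * A * θ) * exp (θ * hoeffdingSum d (conjSwap k l p)) := by
          refine sum_le_sum fun p hp ↦ ?_
          rw [← exp_add, exp_le_exp]
          nlinarith [(abs_le.1
            (abs_hoeffdingSum_sub_conjSwap_le hd hA (hS (mem_filter.1 hp).1) k l)).2]
      _ = exp (8 * A * θ) * ∑ p ∈ {p ∈ S | p i = k}.image (conjSwap k l),
            exp (θ * hoeffdingSum d p) := by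
          rw [← mul_sum, sum_image (conjSwap_involutive k l).injective.injOn]
      _ ≤ _ := by gcongr
  calc #K * ∑ p ∈ S with p i = k, exp (θ * hoeffdingSum d p)
      ≤ ∑ l ∈ K, exp (8 * A * θ) * ∑ p ∈ S with p i = l, exp (θ * hoeffdingSum d p) := by
        rw [← nsmul_eq_mul]
        exact card_nsmul_le_sum K _ _ sum_fiber_le
    _ = exp (8 * A * θ) * ∑ p ∈ S, exp (θ * hoeffdingSum d p) := by
        rw [← mul_sum, sum_fiberwise_of_maps_to hK]

lemma sum_fpf_apply_eq_exp_le {d : ι → ι → ℝ} (hd : ∀ i j, d i j = d j i) {A θ : ℝ}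
    (hA : ∀ i j, |d i j| ≤ A) (hθ : 0 ≤ θ) {i k : ι} (hki : k ≠ i) :
    (Fintype.card ι - 1) * ∑ p ∈ fpfInvolutionFinset ι with p i = k, exp (θ * hoeffdingSum d p) ≤
      exp (8 * A * θ) * ∑ p ∈ fpfInvolutionFinset ι, exp (θ * hoeffdingSum d p) := by
  have hcard : (#({i}ᶜ : Finset ι) : ℝ) = Fintype.card ι - 1 := by
    rw [card_compl, Nat.cast_sub (card_le_univ _), card_singleton, Nat.cast_one]
  rw [← hcard]
  refine card_mul_sum_fiber_exp_le hd hA hθ subset_rfl (fun p hp ↦ ?_) (by simp) (by simpa)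
    fun l _ p hp _ ↦ conjSwap_mem_fpf k l hp
  simpa using apply_ne_of_mem_fpf hp i

lemma sum_fpf_apply_eq_and_apply_eq_exp_le {d : ι → ι → ℝ} (hd : ∀ i j, d i j = d j i) {A θ : ℝ}
    (hA : ∀ i j, |d i j| ≤ A) (hθ : 0 ≤ θ) {i j k l : ι} (hij : i ≠ j)
    (hk : k ∉ ({i, j} : Finset ι)) (hl : l ∉ ({i, j, k} : Finset ι)) :
    (Fintype.card ι - 3) *
        ∑ p ∈ fpfInvolutionFinset ι with p i = k ∧ p j = l, exp (θ * hoeffdingSum d p) ≤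
      exp (8 * A * θ) * ∑ p ∈ fpfInvolutionFinset ι with p i = k, exp (θ * hoeffdingSum d p) := by
  have hcard : (#({i, j, k}ᶜ : Finset ι) : ℝ) = Fintype.card ι - 3 := by
    have : #({i, j, k} : Finset ι) = 3 := card_eq_three.2 ⟨i, j, k, by grind⟩
    rw [card_compl, Nat.cast_sub (card_le_univ _), this, Nat.cast_ofNat]
  rw [← hcard, ← filter_filter]
  refine card_mul_sum_fiber_exp_le hd hA hθ (filter_subset _ _) (fun p hp ↦ ?_) (by simp)
    (mem_compl.2 hl) fun m hm p hp _ ↦ ?_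
  · obtain ⟨hp, hpi⟩ := mem_filter.1 hp
    have hpj : p j ≠ i := fun h ↦ by
      rw [apply_eq_comm_of_mem_fpf hp, hpi] at h
      simp [h] at hk
    have hpk : p j ≠ k := hpi ▸ p.injective.ne hij.symm
    simp [hpj, hpk, apply_ne_of_mem_fpf hp]
  · obtain ⟨hp, hpi⟩ := mem_filter.1 hp
    simp only [mem_compl, mem_insert, mem_singleton, not_or] at hm hl
    refine mem_filter.2 ⟨conjSwap_mem_fpf l m hp, ?_⟩
    rw [conjSwap_apply, swap_apply_of_ne_of_ne (Ne.symm hl.1) (Ne.symm hm.1), hpi,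
      swap_apply_of_ne_of_ne (Ne.symm hl.2.2) (Ne.symm hm.2.2)]

lemma sum_fpf_apply_eq_pair_exp_le {d : ι → ι → ℝ} (hd : ∀ i j, d i j = d j i) {A θ : ℝ}
    (hA : ∀ i j, |d i j| ≤ A) (hθ : 0 ≤ θ) {i j k l : ι} (hij : i ≠ j)
    (hk : k ∉ ({i, j} : Finset ι)) (hl : l ∉ ({i, j, k} : Finset ι)) :
    (Fintype.card ι - 1) * (Fintype.card ι - 3) *
        ∑ p ∈ fpfInvolutionFinset ι with p i = k ∧ p j = l, exp (θ * hoeffdingSum d p) ≤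
      exp (16 * A * θ) * ∑ p ∈ fpfInvolutionFinset ι, exp (θ * hoeffdingSum d p) := by
  have one_le_card : (1 : ℝ) ≤ Fintype.card ι := by exact_mod_cast Fintype.card_pos_iff.2 ⟨i⟩
  have hki : k ≠ i := by grind
  calc _ ≤ (Fintype.card ι - 1) * (exp (8 * A * θ) *
          ∑ p ∈ fpfInvolutionFinset ι with p i = k, exp (θ * hoeffdingSum d p)) := by
        rw [mul_assoc]
        exact mul_le_mul_of_nonneg_left
          (sum_fpf_apply_eq_and_apply_eq_exp_le hd hA hθ hij hk hl) (sub_nonneg.2 one_le_card)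
    _ ≤ exp (8 * A * θ) * (exp (8 * A * θ) *
          ∑ p ∈ fpfInvolutionFinset ι, exp (θ * hoeffdingSum d p)) := by
        rw [mul_left_comm]
        exact mul_le_mul_of_nonneg_left (sum_fpf_apply_eq_exp_le hd hA hθ hki) (exp_pos _).le
    _ = _ := by
        rw [← mul_assoc, ← exp_add]
        ring_nf

lemma sum_fpf_sq_sub_conjSwap_mul {d : ι → ι → ℝ} (hd : ∀ i j, d i j = d j i) (f : Perm ι → ℝ)
    {i j : ι} (hij : i ≠ j) :
    ∑ p ∈ fpfInvolutionFinset ι, (hoeffdingSum d p - hoeffdingSum d (conjSwap i j p)) ^ 2 * f p =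
      ∑ k ∈ {i, j}ᶜ, ∑ l ∈ {i, j}ᶜ, 4 * crossDiff d i j k l ^ 2 *
        ∑ p ∈ fpfInvolutionFinset ι with p i = k ∧ p j = l, f p := by
  have sum_moved : ∑ p ∈ fpfInvolutionFinset ι,
        (hoeffdingSum d p - hoeffdingSum d (conjSwap i j p)) ^ 2 * f p =
      ∑ p ∈ fpfInvolutionFinset ι with p i ≠ j,
        (hoeffdingSum d p - hoeffdingSum d (conjSwap i j p)) ^ 2 * f p := by
    refine (sum_filter_of_ne (p := fun p : Perm ι ↦ p i ≠ j) fun p hp hne hpi ↦ hne ?_).symm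
    rw [conjSwap_eq_self hp hpi, sub_self, zero_pow two_ne_zero, zero_mul]
  rw [sum_moved, ← sum_product', ← sum_fiberwise_of_maps_to (g := fun p ↦ (p i, p j))]
  · refine sum_congr rfl fun ⟨k, l⟩ hkl ↦ ?_
    simp only [mem_product, mem_compl, mem_insert, mem_singleton, not_or] at hkl
    simp only [Prod.mk.injEq, filter_filter, mul_sum]
    refine sum_congr (filter_congr fun p _ ↦ by grind) fun p hp ↦ ?_
    obtain ⟨hp, hpi, hpj⟩ := mem_filter.1 hp
    rw [hoeffdingSum_sub_conjSwap hd hp hij (hpi ▸ hkl.1.2), hpi, hpj]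
    ring
  · intro p hp
    obtain ⟨hp, hpi⟩ := mem_filter.1 hp
    have hpj : p j ≠ i := fun h ↦ hpi ((apply_eq_comm_of_mem_fpf hp).1 h)
    simp [hpi, hpj, apply_ne_of_mem_fpf hp]

lemma sum_fpf_sq_sub_conjSwap_mul_exp_le {d : ι → ι → ℝ} (hd : ∀ i j, d i j = d j i)
    {A θ : ℝ} (hA : ∀ i j, |d i j| ≤ A) (hθ : 0 ≤ θ) (i j : ι) :
    (Fintype.card ι - 1) * (Fintype.card ι - 3) * ∑ p ∈ fpfInvolutionFinset ι,
        (hoeffdingSum d p - hoeffdingSum d (conjSwap i j p)) ^ 2 * exp (θ * hoeffdingSum d p) ≤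
      4 * (∑ k ∈ {i, j}ᶜ, ∑ l ∈ {i, j}ᶜ, crossDiff d i j k l ^ 2) *
        (exp (16 * A * θ) * ∑ p ∈ fpfInvolutionFinset ι, exp (θ * hoeffdingSum d p)) := by
  by_cases hij : i = j
  · subst hij
    simp [conjSwap_self, crossDiff]
  rw [sum_fpf_sq_sub_conjSwap_mul hd _ hij]
  simp only [mul_sum {i, j}ᶜ, sum_mul {i, j}ᶜ]
  refine sum_le_sum fun k hk ↦ sum_le_sum fun l hl ↦ ?_
  by_cases hlk : l = k
  · simp [hlk, crossDiff]
  rw [mem_compl] at hk hl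
  rw [mul_left_comm]
  exact mul_le_mul_of_nonneg_left
    (sum_fpf_apply_eq_pair_exp_le hd hA hθ hij hk (by grind)) (by positivity)

end ExponentialTilting

section Concentration

open Equiv Finset

variable {ι : Type*} [Fintype ι] [DecidableEq ι]

/-- The off-diagonal sum of squares of `d`, normalised as in the paper's `σ_ι²`. For a centered
array `d` this is the variance of the Hoeffding sum over the fixed point free involutions. -/
noncomputable def involutionVariance (d : ι → ι → ℝ) : ℝ :=
  2 * ((Fintype.card ι : ℝ) - 2) / (((Fintype.card ι : ℝ) - 1) * ((Fintype.card ι : ℝ) - 3)) *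
    ∑ i, ∑ j with j ≠ i, d i j ^ 2

lemma involutionVariance_neg (d : ι → ι → ℝ) : involutionVariance (-d) = involutionVariance d := by
  simp [involutionVariance]

lemma sum_fpf_sub_conjSwap_mul_exp_le (hι : 3 < Fintype.card ι) {d : ι → ι → ℝ}
    (hd : ∀ i j, d i j = d j i) {A θ : ℝ} (hA : ∀ i j, |d i j| ≤ A) (hθ : 0 ≤ θ) (i j : ι) :
    ((Fintype.card ι : ℝ) - 1) * ((Fintype.card ι : ℝ) - 3) * ∑ p ∈ fpfInvolutionFinset ι,
        (hoeffdingSum d p - hoeffdingSum d (conjSwap i j p)) * exp (θ * hoeffdingSum d p) ≤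
      2 * (∑ k ∈ {i, j}ᶜ, ∑ l ∈ {i, j}ᶜ, crossDiff d i j k l ^ 2) *
        (θ * exp (24 * A * θ) * ∑ p ∈ fpfInvolutionFinset ι, exp (θ * hoeffdingSum d p)) := by
  have hn : (3 : ℝ) < Fintype.card ι := by exact_mod_cast hι
  have hn₁ : 0 < (Fintype.card ι : ℝ) - 1 := by linarith
  have hn₃ : 0 < (Fintype.card ι : ℝ) - 3 := by linarith
  have exchange := two_mul_sum_sub_mul_exp_le (conjSwap_involutive i j)
    (fun p hp ↦ conjSwap_mem_fpf i j hp)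
    (fun p hp ↦ abs_hoeffdingSum_sub_conjSwap_le hd hA hp i j) hθ
  have second_moment := sum_fpf_sq_sub_conjSwap_mul_exp_le hd hA hθ i j
  have hexp : exp (24 * A * θ) = exp (8 * A * θ) * exp (16 * A * θ) := by
    rw [← exp_add]
    ring_nf
  have combined := (mul_le_mul_of_nonneg_left exchange (mul_pos hn₁ hn₃).le).trans
    ((mul_left_comm _ _ _).trans_le (mul_le_mul_of_nonneg_left second_moment (by positivity)))
  rw [hexp]
  linarith

namespace IsCenteredArray

variable {d : ι → ι → ℝ}

lemma involutionVariance_eq (hd : IsCenteredArray d) :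
    involutionVariance d =
      2 * ((Fintype.card ι : ℝ) - 2) / (((Fintype.card ι : ℝ) - 1) * ((Fintype.card ι : ℝ) - 3)) *
        ∑ i, ∑ j, d i j ^ 2 := by
  simp [involutionVariance, filter_ne', sum_erase_eq_sub, hd.diag]

lemma sum_sum_sub_conjSwap_mul (hd : IsCenteredArray d) (f : Perm ι → ℝ) :
    ∑ i, ∑ j, ∑ p ∈ fpfInvolutionFinset ι,
        (hoeffdingSum d p - hoeffdingSum d (conjSwap i j p)) * f p =
      4 * ((Fintype.card ι : ℝ) - 1) * ∑ p ∈ fpfInvolutionFinset ι, hoeffdingSum d p * f p := by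
  simp only [sum_comm (s := univ) (t := fpfInvolutionFinset ι), ← sum_mul]
  rw [mul_sum]
  exact sum_congr rfl fun p hp ↦ by rw [hd.sum_hoeffdingSum_sub_conjSwap hp, mul_assoc]

lemma sum_hoeffdingSum_mul_exp_le (hι : 3 < Fintype.card ι) (hd : IsCenteredArray d) {A θ : ℝ}
    (hA : ∀ i j, |d i j| ≤ A) (hθ : 0 ≤ θ) :
    ∑ p ∈ fpfInvolutionFinset ι, hoeffdingSum d p * exp (θ * hoeffdingSum d p) ≤
      involutionVariance d * θ * exp (24 * A * θ) *
        ∑ p ∈ fpfInvolutionFinset ι, exp (θ * hoeffdingSum d p) := by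
  have hn : (3 : ℝ) < Fintype.card ι := by exact_mod_cast hι
  have hn₁ : 0 < (Fintype.card ι : ℝ) - 1 := by linarith
  have hn₃ : 0 < (Fintype.card ι : ℝ) - 3 := by linarith
  have sum_pairs_le := sum_le_sum fun i (_ : i ∈ univ) ↦ sum_le_sum fun j (_ : j ∈ univ) ↦
    sum_fpf_sub_conjSwap_mul_exp_le hι hd.symm hA hθ i j
  simp only [← mul_sum univ, ← sum_mul univ] at sum_pairs_le
  rw [hd.sum_sum_sub_conjSwap_mul, hd.sum_sum_compl_sq_crossDiff] at sum_pairs_le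
  rw [hd.involutionVariance_eq]
  have hpos : 0 < ((Fintype.card ι : ℝ) - 1) * (Fintype.card ι - 3) *
      (4 * ((Fintype.card ι : ℝ) - 1)) := by positivity
  refine le_of_mul_le_mul_left ?_ hpos
  calc _ = _ := mul_assoc _ _ _
    _ ≤ _ := sum_pairs_le
    _ = _ := by field_simp

variable [MeasurableSpace (Perm ι)] [MeasurableSingletonClass (Perm ι)]

theorem uniformOn_fpf_real_ge_le (hd : IsCenteredArray d) (hι : 3 < Fintype.card ι)
    (hpar : Even (Fintype.card ι)) {A : ℝ} (hA : ∀ i j, |d i j| ≤ A) {v : ℝ} (hv : 0 < v)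
    (hdv : involutionVariance d ≤ v) {t : ℝ} (ht : 0 ≤ t) :
    (uniformOn (fpfInvolutionFinset ι : Set (Perm ι))).real {p | t ≤ hoeffdingSum d p} ≤
      exp (-(t ^ 2) / (2 * (v + 24 * A * t))) := by
  have hne := fpfInvolutionFinset_nonempty hpar
  have := isProbabilityMeasure_uniformOn (fpfInvolutionFinset ι).finite_toSet hne
  obtain ⟨i⟩ : Nonempty ι := Fintype.card_pos_iff.1 (by lia)
  have hA₀ : 0 ≤ A := (abs_nonneg _).trans (hA i i)
  refine measureReal_ge_le_of_deriv_cgf_le (fun _ ↦ .of_finite) hv (by positivity)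
    (fun θ hθ ↦ ?_) ht
  rw [deriv_cgf_uniformOn_finset hne,
    div_le_iff₀ (sum_pos (fun _ _ ↦ exp_pos _) hne)]
  calc _ ≤ _ := hd.sum_hoeffdingSum_mul_exp_le hι hA hθ
    _ ≤ _ := by gcongr

end IsCenteredArray

/-- The paper's `a_{io}` over an arbitrary finite index type. Note the denominator `n - 2`, although
the sum has `n - 1` terms. -/
noncomputable def rowAverage (a : ι → ι → ℝ) (i : ι) : ℝ :=
  (1 / ((Fintype.card ι : ℝ) - 2)) * ∑ j with j ≠ i, a i j

/-- The paper's `a_{oo}` over an arbitrary finite index type. -/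
noncomputable def totalAverage (a : ι → ι → ℝ) : ℝ :=
  (1 / (((Fintype.card ι : ℝ) - 1) * ((Fintype.card ι : ℝ) - 2))) * ∑ i, ∑ j with j ≠ i, a i j

/-- The array `a_{ij} - 2 a_{io} + a_{oo}` whose entries enter the paper's `σ_ι²` and `a_o`. It need
not be symmetric, even if `a` is. -/
noncomputable def deviation (a : ι → ι → ℝ) (i j : ι) : ℝ :=
  a i j - 2 * rowAverage a i + totalAverage a

/-- The centering array of `a`, the centered array whose Hoeffding sum is that of `a` up to a
constant. Off the diagonal, it is the symmetrization of `deviation a` for symmetric `a`. -/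
noncomputable def centering (a : ι → ι → ℝ) (i j : ι) : ℝ :=
  if i = j then 0 else a i j - rowAverage a i - rowAverage a j + totalAverage a

lemma centering_self (a : ι → ι → ℝ) (i : ι) : centering a i i = 0 := if_pos rfl

lemma centering_of_ne (a : ι → ι → ℝ) {i j : ι} (hij : i ≠ j) :
    centering a i j = a i j - rowAverage a i - rowAverage a j + totalAverage a :=
  if_neg hij

lemma centering_eq_deviation_add_div_two {a : ι → ι → ℝ} (ha : ∀ i j, i ≠ j → a i j = a j i)
    {i j : ι} (hij : i ≠ j) : centering a i j = (deviation a i j + deviation a j i) / 2 := by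
  rw [centering_of_ne a hij, deviation, deviation, ha j i hij.symm]
  ring

lemma sum_ne_eq_mul_rowAverage (hι : 2 < Fintype.card ι) (a : ι → ι → ℝ) (i : ι) :
    ∑ j with j ≠ i, a i j = ((Fintype.card ι : ℝ) - 2) * rowAverage a i := by
  have hn : (2 : ℝ) < Fintype.card ι := by exact_mod_cast hι
  have hn₂ : (Fintype.card ι : ℝ) - 2 ≠ 0 := by linarith
  rw [rowAverage]
  field_simp

lemma sum_rowAverage (hι : 2 < Fintype.card ι) (a : ι → ι → ℝ) :
    ∑ i, rowAverage a i = ((Fintype.card ι : ℝ) - 1) * totalAverage a := by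
  have hn : (2 : ℝ) < Fintype.card ι := by exact_mod_cast hι
  have hn₁ : (Fintype.card ι : ℝ) - 1 ≠ 0 := by linarith
  have hn₂ : (Fintype.card ι : ℝ) - 2 ≠ 0 := by linarith
  simp only [rowAverage, totalAverage, ← mul_sum]
  field_simp

lemma isCenteredArray_centering (hι : 2 < Fintype.card ι) {a : ι → ι → ℝ}
    (ha : ∀ i j, i ≠ j → a i j = a j i) : IsCenteredArray (centering a) where
  symm i j := by
    obtain rfl | hij := eq_or_ne i j
    · rfl
    · rw [centering_of_ne a hij, centering_of_ne a hij.symm, ha i j hij, sub_right_comm]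
  diag := centering_self a
  row_sum i := by
    have off_diag : ∑ j, centering a i j =
        ∑ j with j ≠ i, (a i j - rowAverage a i - rowAverage a j + totalAverage a) := by
      rw [← add_sum_erase univ (centering a i) (mem_univ i), centering_self, zero_add, filter_ne']
      exact sum_congr rfl fun j hj ↦ centering_of_ne a (ne_of_mem_erase hj).symm
    rw [off_diag, sum_add_distrib, sum_sub_distrib, sum_sub_distrib, sum_ne_eq_mul_rowAverage hι]
    simp only [filter_ne', sum_erase_eq_sub (mem_univ i), sum_rowAverage hι, sum_const, card_univ,
      nsmul_eq_mul]
    ring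

lemma hoeffdingSum_sub_eq_hoeffdingSum_centering (hι : 2 < Fintype.card ι) (a : ι → ι → ℝ)
    {p : Perm ι} (hp : p ∈ fpfInvolutionFinset ι) :
    hoeffdingSum a p - ((Fintype.card ι : ℝ) - 2) * totalAverage a =
      hoeffdingSum (centering a) p := by
  simp only [hoeffdingSum, centering_of_ne a (apply_ne_of_mem_fpf hp _).symm, sum_add_distrib,
    sum_sub_distrib, Equiv.sum_comp p (rowAverage a), sum_rowAverage hι, sum_const, card_univ,
    nsmul_eq_mul]
  ring

lemma abs_centering_le [Nontrivial ι] {a : ι → ι → ℝ} (ha : ∀ i j, i ≠ j → a i j = a j i) {A : ℝ}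
    (hA : ∀ i j, i ≠ j → |deviation a i j| ≤ A) (i j : ι) : |centering a i j| ≤ A := by
  obtain rfl | hij := eq_or_ne i j
  · obtain ⟨j, hij⟩ := exists_ne i
    simpa [centering_self] using (abs_nonneg _).trans (hA j i hij)
  · rw [centering_eq_deviation_add_div_two ha hij, abs_le]
    have h_ij := abs_le.1 (hA i j hij)
    have h_ji := abs_le.1 (hA j i hij.symm)
    constructor <;> linarith

lemma sum_sum_ne_sq_half_add_le (b : ι → ι → ℝ) :
    ∑ i, ∑ j with j ≠ i, ((b i j + b j i) / 2) ^ 2 ≤ ∑ i, ∑ j with j ≠ i, b i j ^ 2 := by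
  have sum_swap : ∑ i, ∑ j with j ≠ i, b j i ^ 2 = ∑ i, ∑ j with j ≠ i, b i j ^ 2 := by
    simp only [sum_filter]
    rw [sum_comm]
    simp only [ne_comm]
  calc ∑ i, ∑ j with j ≠ i, ((b i j + b j i) / 2) ^ 2
      ≤ ∑ i, ∑ j with j ≠ i, (b i j ^ 2 + b j i ^ 2) / 2 := by
        gcongr with i _ j _
        linarith [sq_nonneg (b i j - b j i)]
    _ = ∑ i, ∑ j with j ≠ i, b i j ^ 2 := by
        simp only [← sum_div, sum_add_distrib, sum_swap, add_self_div_two]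

lemma involutionVariance_centering_le (hι : 3 < Fintype.card ι) {a : ι → ι → ℝ}
    (ha : ∀ i j, i ≠ j → a i j = a j i) :
    involutionVariance (centering a) ≤ involutionVariance (deviation a) := by
  have hn : (3 : ℝ) < Fintype.card ι := by exact_mod_cast hι
  refine mul_le_mul_of_nonneg_left ?_
    (div_nonneg (by linarith) (mul_nonneg (by linarith) (by linarith)))
  refine (sum_le_sum fun i _ ↦ (sum_congr rfl fun j hj ↦ ?_).le).trans
    (sum_sum_ne_sq_half_add_le (deviation a))
  rw [centering_eq_deviation_add_div_two ha (mem_filter.1 hj).2.symm]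

theorem hoeffding_involution_concentration_general [MeasurableSpace (Perm ι)]
    [MeasurableSingletonClass (Perm ι)] (hι : 3 < Fintype.card ι) (hpar : Even (Fintype.card ι))
    {a : ι → ι → ℝ} (ha : ∀ i j, i ≠ j → a i j = a j i) (hσ : 0 < involutionVariance (deviation a))
    {A : ℝ} (hA : ∀ i j, i ≠ j → |deviation a i j| ≤ A) {t : ℝ} (ht : 0 ≤ t) :
    (uniformOn (fpfInvolutionFinset ι : Set (Perm ι))).real
        {p | t ≤ hoeffdingSum a p - ((Fintype.card ι : ℝ) - 2) * totalAverage a} ≤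
      exp (-(t ^ 2) / (2 * (involutionVariance (deviation a) + 24 * A * t))) ∧
    (uniformOn (fpfInvolutionFinset ι : Set (Perm ι))).real
        {p | hoeffdingSum a p - ((Fintype.card ι : ℝ) - 2) * totalAverage a ≤ -t} ≤
      exp (-(t ^ 2) / (2 * (involutionVariance (deviation a) + 24 * A * t))) := by
  have : Nontrivial ι := Fintype.one_lt_card_iff_nontrivial.1 (by lia)
  have hcentered := isCenteredArray_centering (by lia) ha
  have hvar := involutionVariance_centering_le hι ha
  have habs := abs_centering_le ha hA
  have hsum {p : Perm ι} (hp : p ∈ fpfInvolutionFinset ι) :=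
    hoeffdingSum_sub_eq_hoeffdingSum_centering (by lia) a hp
  have hfin := (fpfInvolutionFinset ι).finite_toSet
  constructor
  · rw [measureReal_def, uniformOn_setOf_congr hfin fun p hp ↦ by rw [hsum hp]]
    exact hcentered.uniformOn_fpf_real_ge_le hι hpar habs hσ hvar ht
  · rw [measureReal_def, uniformOn_setOf_congr hfin fun p hp ↦ by
      rw [hsum hp, le_neg, ← hoeffdingSum_neg]]
    exact hcentered.neg.uniformOn_fpf_real_ge_le hι hpar (by simpa using habs) hσ
      (by rwa [involutionVariance_neg]) ht

end Concentration

lemma fpfInvolutions_eq_coe (n : ℕ) : fpfInvolutions n = fpfInvolutionFinset (Fin n) := by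
  ext p
  simp [mem_fpfInvolutionFinset, fpfInvolutions]

lemma aio_eq_rowAverage (n : ℕ) (a : Fin n → Fin n → ℝ) : aio n a = rowAverage a := by
  ext i
  simp [aio, rowAverage]

lemma aoo_eq_totalAverage (n : ℕ) (a : Fin n → Fin n → ℝ) : aoo n a = totalAverage a := by
  simp [aoo, totalAverage]

lemma sigmaIota2_eq_involutionVariance (n : ℕ) (a : Fin n → Fin n → ℝ) :
    sigmaIota2 n a = involutionVariance (deviation a) := by
  simp [sigmaIota2, involutionVariance, deviation, aio_eq_rowAverage, aoo_eq_totalAverage]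

theorem hoeffding_involution_concentration (n : ℕ) (hn : 5 ≤ n) (hneven : Even n)
    (a : Fin n → Fin n → ℝ) (hsym : ∀ i j, i ≠ j → a i j = a j i)
    (hσ : 0 < sigmaIota2 n a)
    (ao : ℝ)
    (hao : IsGreatest {x : ℝ | ∃ i j, i ≠ j ∧ x = |a i j - 2 * aio n a i + aoo n a|} ao) :
    ∀ t : ℝ, 0 ≤ t →
      ((uniformOn (fpfInvolutions n))
            {p | t ≤ (∑ i, a i (p i)) - ((n : ℝ) - 2) * aoo n a}).toReal ≤
          Real.exp (-(t ^ 2) / (2 * (sigmaIota2 n a + 24 * ao * t))) ∧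
        ((uniformOn (fpfInvolutions n))
            {p | (∑ i, a i (p i)) - ((n : ℝ) - 2) * aoo n a ≤ -t}).toReal ≤
          Real.exp (-(t ^ 2) / (2 * (sigmaIota2 n a + 24 * ao * t))) := by
  intro t ht
  simp only [aio_eq_rowAverage, aoo_eq_totalAverage, sigmaIota2_eq_involutionVariance,
    fpfInvolutions_eq_coe] at hσ hao ⊢
  simpa [measureReal_def, hoeffdingSum] using hoeffding_involution_concentration_general
    (by simp; lia) (by simpa) hsym hσ (A := ao)
    (fun i j hij ↦ hao.2 ⟨i, j, hij, rfl⟩) ht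
end
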